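/- The Gerstenhaber bracket makes the space of Hochschild cochains into a graded Lie superalgebra: for all homogeneous Φ₁ ∈ D^{k₁}, Φ₂ ∈ D^{k₂}, Φ₃ ∈ D^{k₃} one has the graded antisymmetry [Φ₁,Φ₂] = −(−1)^{k₁k₂}[Φ₂,Φ₁] and the graded Jacobi identity [Φ₁,[Φ₂,Φ₃]] = [[Φ₁,Φ₂],Φ₃] + (−1)^{k₁k₂}[Φ₂,[Φ₁,Φ₃]]. -/

import Mathlib

/-!
The bracket is the graded commutator of the Gerstenhaber composition
`Φ₁ • Φ₂ = gcomp Φ₁ Φ₂`, and this composition is a graded pre-Lie product: the associator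
`(Φ₁ • Φ₂) • Φ₃ − Φ₁ • (Φ₂ • Φ₃)` is graded symmetric in `Φ₂, Φ₃` (`gcomp_assoc_symm`).
The graded Jacobi identity of the commutator is then a formal consequence.

The pre-Lie identity comes from the terms `(Φ₁ ∘ᵢ Φ₂) ∘ⱼ Φ₃` of `(Φ₁ • Φ₂) • Φ₃`.
If slot `j` lies inside the block of `Φ₂`, the term is `Φ₁ ∘ᵢ (Φ₂ ∘_{j-i} Φ₃)`
(`insAt_insAt_inside`), and these terms add up to `Φ₁ • (Φ₂ • Φ₃)` because `Φ₁` is additive in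
each slot. Otherwise `Φ₂` and `Φ₃` occupy two distinct slots `p < q` of `Φ₁`, in one of the two
possible orders (`insAt_insAt_right`); the two families together (`pairSum`) are visibly
symmetric, up to the sign `(-1)^{k₂ k₃}`.

Since ranks are natural numbers, `n₂ + n₃ - 1` is truncated when `n₂ = n₃ = 0`; in that case all
compositions involved vanish, so the sign computed from the truncated rank is harmless.
-/

/-!
The Gerstenhaber bracket on Hochschild cochains, in the model where an operator
of rank `n` (i.e. an element of `D^k` with `k = n - 1 ≥ -1`) is represented by a
map `Φ : (ℕ → A) → A` depending only on the first `n` arguments and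
`R`-multilinear in each of them.
-/

namespace Gerstenhaber

variable {A : Type*} [AddCommGroup A]

/-- the sign `(-1)^z` for an integer `z` -/
def esign (z : ℤ) : ℤ := if Even z then 1 else -1

/-- `Φ` represents an `R`-multilinear map `A^{⊗ n} → A`, i.e. an element of
`D^{n-1}`: it depends only on the arguments in positions `< n` and is
`R`-linear in each of them. -/
def IsMultilinearOfRank (R : Type*) {A : Type*} [CommRing R] [AddCommGroup A]
    [Module R A] (n : ℕ) (Φ : (ℕ → A) → A) : Prop :=
  (∀ a b : ℕ → A, (∀ l, l < n → a l = b l) → Φ a = Φ b) ∧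
  (∀ l : ℕ, l < n → ∀ (a : ℕ → A) (x y : A) (r : R),
    Φ (Function.update a l (r • x + y)) =
      r • Φ (Function.update a l x) + Φ (Function.update a l y))

/-- insertion of the rank-`n₂` operator `Φ₂` into the `i`-th slot of `Φ₁`:
`(Φ₁ ∘ᵢ Φ₂)(a₀, …) = Φ₁(a₀, …, a_{i-1}, Φ₂(a_i, …, a_{i+n₂-1}), a_{i+n₂}, …)` -/
def insAt (n₂ : ℕ) (Φ₁ Φ₂ : (ℕ → A) → A) (i : ℕ) : (ℕ → A) → A :=
  fun a => Φ₁ fun l =>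
    if l < i then a l
    else if l = i then Φ₂ (fun t => a (t + i))
    else a (l + n₂ - 1)

/-- the Gerstenhaber (pre-Lie) composition
`Φ₁ • Φ₂ = ∑_{i=0}^{k₁} (-1)^{i k₂} Φ₁ ∘ᵢ Φ₂` of a rank-`n₁` and a rank-`n₂`
operator (`k₁ = n₁ - 1`, `k₂ = n₂ - 1`) -/
def gcomp (n₁ n₂ : ℕ) (Φ₁ Φ₂ : (ℕ → A) → A) : (ℕ → A) → A :=
  fun a => ∑ i ∈ Finset.range n₁, esign ((i : ℤ) * ((n₂ : ℤ) - 1)) • insAt n₂ Φ₁ Φ₂ i a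

/-- the Gerstenhaber bracket `[Φ₁, Φ₂] = Φ₁ • Φ₂ − (-1)^{k₁ k₂} Φ₂ • Φ₁` of a
rank-`n₁` and a rank-`n₂` operator, an operator of rank `n₁ + n₂ - 1`
(degree `k₁ + k₂`). -/
def gbracket (n₁ n₂ : ℕ) (Φ₁ Φ₂ : (ℕ → A) → A) : (ℕ → A) → A :=
  gcomp n₁ n₂ Φ₁ Φ₂ -
    esign (((n₁ : ℤ) - 1) * ((n₂ : ℤ) - 1)) • gcomp n₂ n₁ Φ₂ Φ₁

lemma esign_add (x y : ℤ) : esign (x + y) = esign x * esign y := by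
  unfold esign
  by_cases hx : Even x <;> by_cases hy : Even y <;> simp [Int.even_add, hx, hy]

lemma esign_eq_or (x : ℤ) : esign x = 1 ∨ esign x = -1 := by
  unfold esign; split_ifs <;> simp

/-- The map `x ↦ Φ (a₀, …, a_{i-1}, x, a_{i+1}, …)` as an additive homomorphism. -/
def slotHom {R : Type*} [CommRing R] [Module R A] {n : ℕ} {Φ : (ℕ → A) → A}
    (h : IsMultilinearOfRank R n Φ) {i : ℕ} (hi : i < n) (a : ℕ → A) : A →+ A :=
  AddMonoidHom.mk' (fun x => Φ (Function.update a i x)) fun x y => by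
    simpa using h.2 i hi a x y 1

lemma insAt_eq_slotHom {R : Type*} [CommRing R] [Module R A] {n : ℕ} {Φ : (ℕ → A) → A}
    (h : IsMultilinearOfRank R n Φ) {i : ℕ} (hi : i < n) (m : ℕ) (Ψ : (ℕ → A) → A) (a : ℕ → A) :
    insAt m Φ Ψ i a =
      slotHom h hi (fun l => if l < i then a l else a (l + m - 1)) (Ψ fun t => a (t + i)) := by
  simp only [insAt, slotHom, AddMonoidHom.mk'_apply]
  congr 1
  funext l
  by_cases hl : l = i
  · subst hl; simp
  · simp [hl]

/-- `gcomp` is additive in its second argument, thanks to the multilinearity of the first. -/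
lemma gcomp_sub_smul_right {R : Type*} [CommRing R] [Module R A] {n : ℕ} {Φ : (ℕ → A) → A}
    (h : IsMultilinearOfRank R n Φ) (m : ℕ) (Ψ Θ : (ℕ → A) → A) (c : ℤ) :
    gcomp n m Φ (Ψ - c • Θ) = gcomp n m Φ Ψ - c • gcomp n m Φ Θ := by
  funext a
  simp only [gcomp, Pi.sub_apply, Pi.smul_apply, Finset.smul_sum, ← Finset.sum_sub_distrib]
  refine Finset.sum_congr rfl fun i hi => ?_
  rw [Finset.mem_range] at hi
  simp only [insAt_eq_slotHom h hi, Pi.sub_apply, Pi.smul_apply, map_sub, map_zsmul, smul_sub]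
  rw [smul_comm c]

lemma gcomp_sub_smul_left (n m : ℕ) (Φ Ψ Θ : (ℕ → A) → A) (c : ℤ) :
    gcomp n m (Ψ - c • Θ) Φ = gcomp n m Ψ Φ - c • gcomp n m Θ Φ := by
  funext a
  simp only [gcomp, Pi.sub_apply, Pi.smul_apply, Finset.smul_sum, ← Finset.sum_sub_distrib]
  refine Finset.sum_congr rfl fun i _ => ?_
  simp only [insAt, Pi.sub_apply, Pi.smul_apply, smul_sub]
  rw [smul_comm c]

lemma gcomp_zero_right {R : Type*} [CommRing R] [Module R A] {n : ℕ} {Φ : (ℕ → A) → A}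
    (h : IsMultilinearOfRank R n Φ) (m : ℕ) : gcomp n m Φ 0 = 0 := by
  have := gcomp_sub_smul_right h m 0 0 1
  simpa using this

lemma gcomp_zero_left (n m : ℕ) (Φ : (ℕ → A) → A) : gcomp n m 0 Φ = 0 := by
  funext a
  simp [gcomp, insAt]

lemma gcomp_rank_zero (m : ℕ) (Φ Ψ : (ℕ → A) → A) : gcomp 0 m Φ Ψ = 0 := by
  funext a
  simp [gcomp]

/-- Inserting `Φ₃` into a slot belonging to the block of `Φ₂`. -/
lemma insAt_insAt_inside (n₂ n₃ : ℕ) (Φ₁ Φ₂ Φ₃ : (ℕ → A) → A) (i t : ℕ) (ht : t < n₂)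
    (a : ℕ → A) :
    insAt n₃ (insAt n₂ Φ₁ Φ₂ i) Φ₃ (i + t) a =
      insAt (n₂ + n₃ - 1) Φ₁ (insAt n₃ Φ₂ Φ₃ t) i a := by
  simp only [insAt]
  congr 1
  funext l
  rcases lt_trichotomy l i with hl | hl | hl
  · rw [if_pos hl, if_pos hl, if_pos (by omega)]
  · subst hl
    simp only [lt_irrefl, if_false, if_true]
    congr 1
    funext s
    rcases lt_trichotomy s t with hs | hs | hs
    · rw [if_pos hs, if_pos (by omega)]
    · subst hs
      rw [if_neg (by omega), if_pos (by omega), if_neg (by omega), if_pos rfl]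
      congr 1
      funext u
      congr 1
      omega
    · rw [if_neg (by omega), if_neg (by omega), if_neg (by omega), if_neg (by omega)]
      congr 1
      omega
  · rw [if_neg (by omega), if_neg (by omega), if_neg (by omega), if_neg (by omega),
      if_neg (by omega), if_neg (by omega)]
    congr 1
    omega

/-- Inserting `Φ₃` to the right of the block of `Φ₂`, i.e. into the slot `q > p` of `Φ₁`:
the two insertions may be performed in the opposite order. -/
lemma insAt_insAt_right {n₂ : ℕ} {Φ₂ : (ℕ → A) → A}
    (h₂ : ∀ a b : ℕ → A, (∀ l, l < n₂ → a l = b l) → Φ₂ a = Φ₂ b)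
    (n₃ : ℕ) (Φ₁ Φ₃ : (ℕ → A) → A) (p r : ℕ) (a : ℕ → A) :
    insAt n₃ (insAt n₂ Φ₁ Φ₂ p) Φ₃ (p + (n₂ + r)) a =
      insAt n₂ (insAt n₃ Φ₁ Φ₃ (p + 1 + r)) Φ₂ p a := by
  simp only [insAt]
  congr 1
  funext l
  rcases lt_trichotomy l p with hl | hl | hl
  · rw [if_pos hl, if_pos (by omega), if_pos (by omega), if_pos hl]
  · subst hl
    rw [if_neg (by omega), if_pos rfl, if_pos (by omega), if_neg (by omega), if_pos rfl]
    refine h₂ _ _ fun s hs => ?_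
    rw [if_pos (by omega)]
  · rw [if_neg (by omega), if_neg (by omega)]
    rcases lt_trichotomy l (p + 1 + r) with hq | hq | hq
    · rw [if_pos (by omega), if_pos hq, if_neg (by omega), if_neg (by omega)]
    · rw [if_neg (by omega), if_pos (by omega), if_neg (by omega), if_pos hq]
      congr 1
      funext u
      rw [if_neg (by omega), if_neg (by omega)]
      congr 1
      omega
    · rw [if_neg (by omega), if_neg (by omega), if_neg (by omega), if_neg (by omega),
        if_neg (by omega), if_neg (by omega)]
      congr 1
      omega

/-- The signed sum, over all pairs of slots `p < q` of `Φ`, of the operators obtained by inserting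
`Ψ` into slot `p` and `Θ` into slot `q`. The insertion at `q` is done first, so that both
positions refer to the slots of `Φ`. -/
def pairSum (n m k : ℕ) (Φ Ψ Θ : (ℕ → A) → A) : (ℕ → A) → A :=
  fun a => ∑ q ∈ Finset.range n, ∑ p ∈ Finset.range q,
    (esign ((p : ℤ) * ((m : ℤ) - 1)) * esign ((q : ℤ) * ((k : ℤ) - 1))) •
      insAt m (insAt k Φ Θ q) Ψ p a

/-- The associator of `gcomp` is the sum over all ways of inserting `Φ₂` and `Φ₃` into two
distinct slots of `Φ₁`. -/
lemma gcomp_gcomp {R : Type*} [CommRing R] [Module R A] {n₁ n₂ : ℕ} {Φ₁ Φ₂ : (ℕ → A) → A}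
    (h₁ : IsMultilinearOfRank R n₁ Φ₁) (h₂ : IsMultilinearOfRank R n₂ Φ₂)
    (n₃ : ℕ) (Φ₃ : (ℕ → A) → A) :
    gcomp (n₁ + n₂ - 1) n₃ (gcomp n₁ n₂ Φ₁ Φ₂) Φ₃ =
      gcomp n₁ (n₂ + n₃ - 1) Φ₁ (gcomp n₂ n₃ Φ₂ Φ₃) + pairSum n₁ n₃ n₂ Φ₁ Φ₃ Φ₂ +
        esign (((n₂ : ℤ) - 1) * ((n₃ : ℤ) - 1)) • pairSum n₁ n₂ n₃ Φ₁ Φ₂ Φ₃ := by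
  funext a
  -- The terms of the left-hand side, with the slot `i` of `Φ₁` receiving `Φ₂` fixed.
  have hL : gcomp (n₁ + n₂ - 1) n₃ (gcomp n₁ n₂ Φ₁ Φ₂) Φ₃ a =
      ∑ i ∈ Finset.range n₁, ∑ j ∈ Finset.range (n₁ + n₂ - 1),
        (esign ((j : ℤ) * ((n₃ : ℤ) - 1)) * esign ((i : ℤ) * ((n₂ : ℤ) - 1))) •
          insAt n₃ (insAt n₂ Φ₁ Φ₂ i) Φ₃ j a := by
    rw [Finset.sum_comm]
    simp only [gcomp]
    refine Finset.sum_congr rfl fun j _ => ?_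
    simp only [mul_smul, ← Finset.smul_sum]
    rfl
  have hP : pairSum n₁ n₂ n₃ Φ₁ Φ₂ Φ₃ a =
      ∑ i ∈ Finset.range n₁, ∑ r ∈ Finset.range (n₁ - (i + 1)),
        (esign ((i : ℤ) * ((n₂ : ℤ) - 1)) *
          esign (((i + 1 + r : ℕ) : ℤ) * ((n₃ : ℤ) - 1))) •
            insAt n₂ (insAt n₃ Φ₁ Φ₃ (i + 1 + r)) Φ₂ i a := by
    simp only [pairSum]
    rw [Finset.sum_comm' (t' := Finset.range n₁) (s' := fun p => Finset.Ico (p + 1) n₁)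
      (by intro q p; simp only [Finset.mem_range, Finset.mem_Ico]; omega)]
    refine Finset.sum_congr rfl fun i _ => ?_
    rw [Finset.sum_Ico_eq_sum_range]
  rw [Pi.add_apply, Pi.add_apply, Pi.smul_apply, hL, hP]
  simp only [pairSum, gcomp, Finset.smul_sum, ← Finset.sum_add_distrib]
  refine Finset.sum_congr rfl fun i hi => ?_
  rw [Finset.mem_range] at hi
  rw [show n₁ + n₂ - 1 = i + (n₂ + (n₁ - (i + 1))) by omega, Finset.sum_range_add,
    Finset.sum_range_add, add_comm (∑ x ∈ Finset.range i, _), add_right_comm]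
  congr 1
  congr 1
  · rw [insAt_eq_slotHom h₁ hi, gcomp, map_sum, Finset.smul_sum]
    refine Finset.sum_congr rfl fun t ht => ?_
    rw [Finset.mem_range] at ht
    rw [insAt_insAt_inside _ _ _ _ _ _ _ ht, map_zsmul, smul_smul,
      insAt_eq_slotHom h₁ hi, ← esign_add, ← esign_add]
    congr 2
    have : ((n₂ + n₃ - 1 : ℕ) : ℤ) = n₂ + n₃ - 1 := by omega
    rw [this]
    push_cast
    ring
  · refine Finset.sum_congr rfl fun r _ => ?_
    rw [insAt_insAt_right h₂.1, smul_smul, ← esign_add, ← esign_add, ← esign_add]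
    congr 2
    push_cast
    ring

/-- The graded pre-Lie identity: the associator of `gcomp` is graded symmetric in its last two
arguments. -/
lemma gcomp_assoc_symm {R : Type*} [CommRing R] [Module R A] {n₁ n₂ n₃ : ℕ}
    {Φ₁ Φ₂ Φ₃ : (ℕ → A) → A} (h₁ : IsMultilinearOfRank R n₁ Φ₁)
    (h₂ : IsMultilinearOfRank R n₂ Φ₂) (h₃ : IsMultilinearOfRank R n₃ Φ₃) :
    gcomp (n₁ + n₂ - 1) n₃ (gcomp n₁ n₂ Φ₁ Φ₂) Φ₃
        - gcomp n₁ (n₂ + n₃ - 1) Φ₁ (gcomp n₂ n₃ Φ₂ Φ₃) =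
      esign (((n₂ : ℤ) - 1) * ((n₃ : ℤ) - 1)) •
        (gcomp (n₁ + n₃ - 1) n₂ (gcomp n₁ n₃ Φ₁ Φ₃) Φ₂
          - gcomp n₁ (n₂ + n₃ - 1) Φ₁ (gcomp n₃ n₂ Φ₃ Φ₂)) := by
  rw [gcomp_gcomp h₁ h₂, gcomp_gcomp h₁ h₃, add_comm n₃ n₂,
    mul_comm ((n₃ : ℤ) - 1) ((n₂ : ℤ) - 1)]
  rcases esign_eq_or (((n₂ : ℤ) - 1) * ((n₃ : ℤ) - 1)) with h | h <;> rw [h] <;> module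

/-- The expansion of a nested bracket. The outer sign is written as a product of the pairwise
signs, which also covers the case `n₂ = n₃ = 0` of a truncated rank. -/
lemma gbracket_gbracket {R : Type*} [CommRing R] [Module R A] {n₁ : ℕ} {Φ₁ : (ℕ → A) → A}
    (h₁ : IsMultilinearOfRank R n₁ Φ₁) (n₂ n₃ : ℕ) (Φ₂ Φ₃ : (ℕ → A) → A) :
    gbracket n₁ (n₂ + n₃ - 1) Φ₁ (gbracket n₂ n₃ Φ₂ Φ₃) =
      gcomp n₁ (n₂ + n₃ - 1) Φ₁ (gcomp n₂ n₃ Φ₂ Φ₃)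
        - esign (((n₂ : ℤ) - 1) * ((n₃ : ℤ) - 1)) •
          gcomp n₁ (n₂ + n₃ - 1) Φ₁ (gcomp n₃ n₂ Φ₃ Φ₂)
        - (esign (((n₁ : ℤ) - 1) * ((n₂ : ℤ) - 1)) * esign (((n₁ : ℤ) - 1) * ((n₃ : ℤ) - 1))) •
          (gcomp (n₂ + n₃ - 1) n₁ (gcomp n₂ n₃ Φ₂ Φ₃) Φ₁
            - esign (((n₂ : ℤ) - 1) * ((n₃ : ℤ) - 1)) •
              gcomp (n₂ + n₃ - 1) n₁ (gcomp n₃ n₂ Φ₃ Φ₂) Φ₁) := by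
  unfold gbracket
  rw [gcomp_sub_smul_right h₁, gcomp_sub_smul_left, ← esign_add]
  by_cases h0 : n₂ + n₃ = 0
  · obtain ⟨rfl, rfl⟩ : n₂ = 0 ∧ n₃ = 0 := by omega
    simp only [gcomp_rank_zero, gcomp_zero_left, gcomp_zero_right h₁, smul_zero, sub_zero]
  · have : ((n₂ + n₃ - 1 : ℕ) : ℤ) = n₂ + n₃ - 1 := by omega
    rw [this]
    congr 3
    ring

lemma gbracket_antisymm (n₁ n₂ : ℕ) (Φ₁ Φ₂ : (ℕ → A) → A) :
    gbracket n₁ n₂ Φ₁ Φ₂ =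
      (-esign (((n₁ : ℤ) - 1) * ((n₂ : ℤ) - 1))) • gbracket n₂ n₁ Φ₂ Φ₁ := by
  unfold gbracket
  rw [mul_comm ((n₂ : ℤ) - 1) ((n₁ : ℤ) - 1)]
  rcases esign_eq_or (((n₁ : ℤ) - 1) * ((n₂ : ℤ) - 1)) with h | h <;> rw [h] <;> module

/-- The expansion of a bracket nested on the left, with the same convention for the sign. -/
lemma gbracket_gbracket_left {R : Type*} [CommRing R] [Module R A] {n₃ : ℕ} {Φ₃ : (ℕ → A) → A}
    (h₃ : IsMultilinearOfRank R n₃ Φ₃) (n₁ n₂ : ℕ) (Φ₁ Φ₂ : (ℕ → A) → A) :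
    gbracket (n₁ + n₂ - 1) n₃ (gbracket n₁ n₂ Φ₁ Φ₂) Φ₃ =
      gcomp (n₁ + n₂ - 1) n₃ (gcomp n₁ n₂ Φ₁ Φ₂) Φ₃
        - esign (((n₁ : ℤ) - 1) * ((n₂ : ℤ) - 1)) •
          gcomp (n₁ + n₂ - 1) n₃ (gcomp n₂ n₁ Φ₂ Φ₁) Φ₃
        - (esign (((n₁ : ℤ) - 1) * ((n₃ : ℤ) - 1)) * esign (((n₂ : ℤ) - 1) * ((n₃ : ℤ) - 1))) •
          (gcomp n₃ (n₁ + n₂ - 1) Φ₃ (gcomp n₁ n₂ Φ₁ Φ₂)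
            - esign (((n₁ : ℤ) - 1) * ((n₂ : ℤ) - 1)) •
              gcomp n₃ (n₁ + n₂ - 1) Φ₃ (gcomp n₂ n₁ Φ₂ Φ₁)) := by
  unfold gbracket
  rw [gcomp_sub_smul_right h₃, gcomp_sub_smul_left, ← esign_add]
  by_cases h0 : n₁ + n₂ = 0
  · obtain ⟨rfl, rfl⟩ : n₁ = 0 ∧ n₂ = 0 := by omega
    simp only [gcomp_rank_zero, gcomp_zero_left, gcomp_zero_right h₃, smul_zero, sub_zero]
  · have : ((n₁ + n₂ - 1 : ℕ) : ℤ) = n₁ + n₂ - 1 := by omega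
    rw [this]
    congr 3
    ring

/-- The Gerstenhaber bracket makes the space of Hochschild
cochains into a graded Lie superalgebra: for all homogeneous
`Φ₁ ∈ D^{k₁}, Φ₂ ∈ D^{k₂}, Φ₃ ∈ D^{k₃}` (here `kᵢ = nᵢ - 1`) one has the graded
antisymmetry `[Φ₁,Φ₂] = −(−1)^{k₁k₂}[Φ₂,Φ₁]` and the graded Jacobi identity
`[Φ₁,[Φ₂,Φ₃]] = [[Φ₁,Φ₂],Φ₃] + (−1)^{k₁k₂}[Φ₂,[Φ₁,Φ₃]]`. -/
theorem gerstenhaber_graded_lie_superalgebra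
    {R A : Type*} [CommRing R] [AddCommGroup A] [Module R A]
    (n₁ n₂ n₃ : ℕ) (Φ₁ Φ₂ Φ₃ : (ℕ → A) → A)
    (h₁ : IsMultilinearOfRank R n₁ Φ₁) (h₂ : IsMultilinearOfRank R n₂ Φ₂)
    (h₃ : IsMultilinearOfRank R n₃ Φ₃) :
    gbracket n₁ n₂ Φ₁ Φ₂ =
      (-esign (((n₁ : ℤ) - 1) * ((n₂ : ℤ) - 1))) • gbracket n₂ n₁ Φ₂ Φ₁ ∧
    gbracket n₁ (n₂ + n₃ - 1) Φ₁ (gbracket n₂ n₃ Φ₂ Φ₃) =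
      gbracket (n₁ + n₂ - 1) n₃ (gbracket n₁ n₂ Φ₁ Φ₂) Φ₃ +
        esign (((n₁ : ℤ) - 1) * ((n₂ : ℤ) - 1)) •
          gbracket n₂ (n₁ + n₃ - 1) Φ₂ (gbracket n₁ n₃ Φ₁ Φ₃) := by
  refine ⟨gbracket_antisymm n₁ n₂ Φ₁ Φ₂, ?_⟩
  rw [gbracket_gbracket h₁, gbracket_gbracket h₂, gbracket_gbracket_left h₃]
  -- Three associator identities, scaled by the signs with which they enter the Jacobi identity.
  have e₁ := gcomp_assoc_symm h₁ h₂ h₃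
  have e₂ := congrArg (esign (((n₁ : ℤ) - 1) * ((n₂ : ℤ) - 1)) • ·) (gcomp_assoc_symm h₂ h₁ h₃)
  have e₃ := congrArg
    ((esign (((n₁ : ℤ) - 1) * ((n₃ : ℤ) - 1)) * esign (((n₂ : ℤ) - 1) * ((n₃ : ℤ) - 1))) • ·)
    (gcomp_assoc_symm h₃ h₁ h₂)
  rw [add_comm n₂ n₁] at e₂
  rw [add_comm n₃ n₁, add_comm n₃ n₂] at e₃
  rw [mul_comm ((n₂ : ℤ) - 1) ((n₁ : ℤ) - 1)]
  -- Only the values `±1` of the three signs matter from here on.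
  rcases esign_eq_or (((n₁ : ℤ) - 1) * ((n₂ : ℤ) - 1)) with s₁₂ | s₁₂ <;>
  rcases esign_eq_or (((n₁ : ℤ) - 1) * ((n₃ : ℤ) - 1)) with s₁₃ | s₁₃ <;>
  rcases esign_eq_or (((n₂ : ℤ) - 1) * ((n₃ : ℤ) - 1)) with s₂₃ | s₂₃ <;>
  simp only [s₁₂, s₁₃, s₂₃] at e₁ e₂ e₃ ⊢
  all_goals linear_combination (norm := module) e₂ - e₁ - e₃

end Gerstenhaber
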